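/- Let h be a permutation of a finite set X of size d with cycle type μ (including fixed points), and let i < j be positive integers. Then the number of transpositions τ of X such that the cycle type of τ∘h equals μ with one part equal to i+j removed and two parts equal to i and j added is exactly (i+j)·m_{i+j}(μ). -/

import Mathlib

open Finset Equiv

/-- The cycle type of a permutation including fixed points: the multiset of the sizes of
all cycles (orbits), where each fixed point contributes a part equal to `1`. -/
def cycleTypeFull {X : Type*} [Fintype X] [DecidableEq X] (h : Equiv.Perm X) : Multiset ℕ :=
  h.cycleType + Multiset.replicate (Finset.univ.filter fun x => h x = x).card 1


section helpers

open Function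

variable {X : Type*} [Fintype X] [DecidableEq X]

theorem mp_mem (h : Equiv.Perm X) (x : X) : x ∈ periodicPts h := by
  refine mk_mem_periodicPts (orderOf_pos h) ?_
  rw [IsPeriodicPt, IsFixedPt, Equiv.Perm.iterate_eq_pow, pow_orderOf_eq_one]
  rfl

theorem mp_pos (h : Equiv.Perm X) (x : X) : 0 < minimalPeriod h x :=
  minimalPeriod_pos_of_mem_periodicPts (mp_mem h x)

theorem card_cycleOf (h : Equiv.Perm X) (x : X) (hx : h x ≠ x) :
    (h.cycleOf x).support.card = minimalPeriod h x := by
  have hc := h.isCycleOn_support_cycleOf x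
  have hm : x ∈ (h.cycleOf x).support := by
    rw [Equiv.Perm.mem_support_cycleOf_iff' hx]
  apply Nat.dvd_antisymm
  · rw [← hc.pow_apply_eq hm, ← Equiv.Perm.iterate_eq_pow]
    exact isPeriodicPt_minimalPeriod h x
  · apply IsPeriodicPt.minimalPeriod_dvd
    rw [IsPeriodicPt, IsFixedPt, Equiv.Perm.iterate_eq_pow, hc.pow_apply_eq hm]

/-- Counting parts through points of a given period. -/
theorem count_full (h : Equiv.Perm X) (n : ℕ) :
    n * (cycleTypeFull h).count n
      = (Finset.univ.filter fun x => minimalPeriod h x = n).card := by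
  rcases Nat.eq_zero_or_pos n with rfl | hn
  · have : ∀ x, minimalPeriod h x ≠ 0 := fun x => (mp_pos h x).ne'
    simp [this]
  unfold cycleTypeFull
  rw [Multiset.count_add, Multiset.count_replicate]
  rcases Nat.lt_or_ge 1 n with h1 | h1
  · rw [if_neg (by omega), add_zero, Equiv.Perm.cycleType_def, Multiset.count_map]
    have key : ∀ c ∈ h.cycleFactorsFinset.filter (fun c => n = c.support.card),
        ((Finset.univ.filter fun x => minimalPeriod h x = n).filter
          (fun x => h.cycleOf x = c)).card = n := by
      intro c hc
      rw [Finset.mem_filter] at hc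
      obtain ⟨hc, hcn⟩ := hc
      conv_rhs => rw [hcn]
      congr 1
      ext x
      simp only [Finset.mem_filter, Finset.mem_univ, true_and]
      constructor
      · rintro ⟨h2, rfl⟩
        have hx : h x ≠ x := by
          intro hx
          have := minimalPeriod_eq_one_iff_isFixedPt.2 hx
          omega
        rw [Equiv.Perm.mem_support_cycleOf_iff' hx]
      · intro hx
        have e := Equiv.Perm.cycle_is_cycleOf hx hc
        have hx' : h x ≠ x := by
          have := Equiv.Perm.mem_cycleFactorsFinset_support_le hc hx
          simpa using this
        refine ⟨?_, e.symm⟩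
        rw [← card_cycleOf h x hx', ← e, hcn]
    have maps : ∀ x ∈ (Finset.univ.filter fun x => minimalPeriod h x = n),
        h.cycleOf x ∈ h.cycleFactorsFinset.filter (fun c => n = c.support.card) := by
      intro x hx
      simp only [Finset.mem_filter, Finset.mem_univ, true_and] at hx
      have hx' : h x ≠ x := by
        intro hx2
        have := minimalPeriod_eq_one_iff_isFixedPt.2 hx2
        omega
      rw [Finset.mem_filter, Equiv.Perm.cycleOf_mem_cycleFactorsFinset_iff, card_cycleOf h x hx']
      exact ⟨by simpa using hx', hx.symm⟩
    rw [Finset.card_eq_sum_card_fiberwise maps, Finset.sum_congr rfl key, Finset.sum_const,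
      smul_eq_mul, mul_comm]
    rfl
  · obtain rfl : n = 1 := by omega
    rw [if_pos rfl, Multiset.count_eq_zero.2, zero_add, one_mul]
    · congr 1
      ext x
      simp only [Finset.mem_filter, Finset.mem_univ, true_and]
      rw [minimalPeriod_eq_one_iff_isFixedPt]
      rfl
    · intro hm
      have := Equiv.Perm.two_le_of_mem_cycleType hm
      omega

/-- The first part of the orbit is unchanged by multiplying with a transposition. -/
theorem iter_aux (h : Equiv.Perm X) (s t : X) (k : ℕ)
    (H : ∀ b, 0 < b → b < k → h^[b] s ≠ s ∧ h^[b] s ≠ t) (b : ℕ) (hb : b < k) :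
    (swap s t * h)^[b] s = h^[b] s := by
  induction b with
  | zero => rfl
  | succ b ih =>
    rw [iterate_succ_apply', iterate_succ_apply', ih (by omega), Equiv.Perm.mul_apply]
    have := H (b + 1) (by omega) hb
    rw [iterate_succ_apply'] at this
    exact swap_apply_of_ne_of_ne this.1 this.2

theorem iter_last (h : Equiv.Perm X) (s t : X) (k : ℕ) (hk : 0 < k)
    (H : ∀ b, 0 < b → b < k → h^[b] s ≠ s ∧ h^[b] s ≠ t) :
    (swap s t * h)^[k] s = swap s t (h^[k] s) := by
  obtain ⟨b, rfl⟩ : ∃ b, k = b + 1 := ⟨k - 1, by omega⟩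
  rw [iterate_succ_apply', iterate_succ_apply', iter_aux h s t (b + 1) H b (by omega)]
  rfl

theorem orbit_ne (h : Equiv.Perm X) (s : X) {a b : ℕ} (ha : a < minimalPeriod h s)
    (hb : b < minimalPeriod h s) (hab : a ≠ b) : h^[a] s ≠ h^[b] s := fun e =>
  hab ((iterate_eq_iterate_iff_of_lt_minimalPeriod ha hb).1 e)

theorem H_aux (h : Equiv.Perm X) (s : X) (k : ℕ) (hk : k < minimalPeriod h s) :
    ∀ b, 0 < b → b < k → h^[b] s ≠ s ∧ h^[b] s ≠ h^[k] s := fun b hb hbk =>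
  ⟨orbit_ne h s (b := 0) (by omega) (by omega) (by omega),
    orbit_ne h s (by omega) (by omega) (by omega)⟩

theorem mp_first (h : Equiv.Perm X) (s : X) (k : ℕ) (hk0 : 0 < k)
    (hk : k < minimalPeriod h s) :
    minimalPeriod (swap s (h^[k] s) * h) s = k := by
  have hp : IsPeriodicPt (swap s (h^[k] s) * h) k s := by
    rw [IsPeriodicPt, IsFixedPt, iter_last h s _ k hk0 (H_aux h s k hk), swap_apply_right]
  refine le_antisymm (hp.minimalPeriod_le hk0) ?_
  by_contra hlt
  push Not at hlt
  have h1 := isPeriodicPt_minimalPeriod (swap s (h^[k] s) * h) s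
  have h0 := mp_pos (swap s (h^[k] s) * h) s
  rw [IsPeriodicPt, IsFixedPt, iter_aux h s _ k (H_aux h s k hk) _ hlt] at h1
  exact (H_aux h s k hk _ h0 hlt).1 h1

theorem mp_orbit (h : Equiv.Perm X) (s : X) (k : ℕ) (hk0 : 0 < k)
    (hk : k < minimalPeriod h s) (a : ℕ) (ha : a < k) :
    minimalPeriod (swap s (h^[k] s) * h) (h^[a] s) = k := by
  rw [← iter_aux h s _ k (H_aux h s k hk) a ha, minimalPeriod_apply_iterate (mp_mem _ _),
    mp_first h s k hk0 hk]

theorem mp_orbit2 (h : Equiv.Perm X) (s : X) (k : ℕ) (hk0 : 0 < k)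
    (hk : k < minimalPeriod h s) (a : ℕ) (ha : a < minimalPeriod h s - k) :
    minimalPeriod (swap s (h^[k] s) * h) (h^[k + a] s) = minimalPeriod h s - k := by
  have hp : minimalPeriod h (h^[k] s) = minimalPeriod h s :=
    minimalPeriod_apply_iterate (mp_mem _ _) k
  have hs : h^[minimalPeriod h s - k] (h^[k] s) = s := by
    rw [← iterate_add_apply, Nat.sub_add_cancel hk.le, iterate_minimalPeriod]
  have := mp_orbit h (h^[k] s) (minimalPeriod h s - k) (by omega) (by omega) a ha
  rwa [hs, swap_comm, ← iterate_add_apply, add_comm a k] at this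

theorem mp_off (h : Equiv.Perm X) (s : X) (k : ℕ) (x : X) (hx : ∀ a, h^[a] s ≠ x) :
    minimalPeriod (swap s (h^[k] s) * h) x = minimalPeriod h x := by
  have ne : ∀ a b, h^[b] x ≠ h^[a] s := by
    intro a b e
    have hb : b ≤ b * minimalPeriod h x := Nat.le_mul_of_pos_right _ (mp_pos h x)
    apply hx (b * minimalPeriod h x - b + a)
    rw [iterate_add_apply, ← e, ← iterate_add_apply, Nat.sub_add_cancel hb]
    exact (isPeriodicPt_minimalPeriod h x).const_mul b
  have it : ∀ b, (swap s (h^[k] s) * h)^[b] x = h^[b] x := by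
    intro b
    induction b with
    | zero => rfl
    | succ b ih =>
      rw [iterate_succ_apply', ih, Equiv.Perm.mul_apply, ← iterate_succ_apply' h]
      exact swap_apply_of_ne_of_ne (ne 0 _) (ne k _)
  rw [minimalPeriod_eq_minimalPeriod_iff]
  intro n
  rw [IsPeriodicPt, IsPeriodicPt, IsFixedPt, IsFixedPt, it]

open Classical in
theorem count_orbit (h : Equiv.Perm X) (s : X) (p : X → ℕ) (m : ℕ) :
    (Finset.univ.filter fun x => p x = m).card
      = ((Finset.univ.filter fun x => ∀ a, h^[a] s ≠ x).filter fun x => p x = m).card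
        + ∑ a ∈ Finset.range (minimalPeriod h s), if p (h^[a] s) = m then 1 else 0 := by
  classical
  have e : (Finset.univ.filter fun x => ¬ ∀ a, h^[a] s ≠ x)
      = (Finset.range (minimalPeriod h s)).image fun a => h^[a] s := by
    ext x
    simp only [Finset.mem_filter, Finset.mem_univ, true_and, Finset.mem_image, Finset.mem_range]
    push Not
    constructor
    · rintro ⟨a, rfl⟩
      exact ⟨a % minimalPeriod h s, Nat.mod_lt _ (mp_pos h s), iterate_mod_minimalPeriod_eq⟩
    · rintro ⟨a, -, rfl⟩
      exact ⟨a, rfl⟩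
  rw [Finset.card_filter, ← Finset.sum_filter_add_sum_filter_not _ (fun x => ∀ a, h^[a] s ≠ x),
    Finset.card_filter, e, Finset.sum_image]
  intro a ha b hb hab
  exact (iterate_eq_iterate_iff_of_lt_minimalPeriod (by simpa using ha) (by simpa using hb)).1 hab

open Classical in
theorem full_cut (h : Equiv.Perm X) (s : X) (k : ℕ) (hk0 : 0 < k) (hk : k < minimalPeriod h s) :
    cycleTypeFull (swap s (h^[k] s) * h) + {minimalPeriod h s}
      = cycleTypeFull h + {k, minimalPeriod h s - k} := by
  have zero : ∀ g : Equiv.Perm X, (cycleTypeFull g).count 0 = 0 := by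
    intro g
    rw [Multiset.count_eq_zero]
    intro hm
    rw [cycleTypeFull, Multiset.mem_add] at hm
    rcases hm with hm | hm
    · have := Equiv.Perm.two_le_of_mem_cycleType hm
      omega
    · have := Multiset.eq_of_mem_replicate hm
      omega
  ext m
  rcases Nat.eq_zero_or_pos m with rfl | hm
  · simp only [Multiset.count_add, zero, Multiset.insert_eq_cons, Multiset.count_cons,
      Multiset.count_singleton]
    have := mp_pos h s
    split_ifs <;> omega
  apply Nat.eq_of_mul_eq_mul_left hm
  rw [Multiset.count_add, Multiset.count_add, mul_add, mul_add, count_full, count_full,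
    count_orbit h s, count_orbit h s (fun x => minimalPeriod h x)]
  have e1 : ((Finset.univ.filter fun x => ∀ a, h^[a] s ≠ x).filter
        fun x => minimalPeriod (swap s (h^[k] s) * h) x = m)
      = ((Finset.univ.filter fun x => ∀ a, h^[a] s ≠ x).filter
        fun x => minimalPeriod h x = m) := by
    apply Finset.filter_congr
    intro x hx
    rw [Finset.mem_filter] at hx
    rw [mp_off h s k x hx.2]
  have e2 : (∑ a ∈ Finset.range (minimalPeriod h s),
      if minimalPeriod h (h^[a] s) = m then 1 else 0)
      = if minimalPeriod h s = m then minimalPeriod h s else 0 := by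
    simp only [minimalPeriod_apply_iterate (mp_mem h s)]
    split_ifs <;> simp
  have e3 : (∑ a ∈ Finset.range (minimalPeriod h s),
      if minimalPeriod (swap s (h^[k] s) * h) (h^[a] s) = m then 1 else 0)
      = (if k = m then k else 0)
        + if minimalPeriod h s - k = m then minimalPeriod h s - k else 0 := by
    have hn : minimalPeriod h s = k + (minimalPeriod h s - k) := by omega
    conv_lhs => rw [hn]
    rw [Finset.sum_range_add]
    congr 1
    · rw [Finset.sum_congr rfl (g := fun _ => if k = m then 1 else 0)]
      · split_ifs <;> simp
      · intro a ha
        rw [mp_orbit h s k hk0 hk a (by simpa using ha)]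
    · rw [Finset.sum_congr rfl (g := fun _ => if minimalPeriod h s - k = m then 1 else 0)]
      · split_ifs <;> simp
      · intro a ha
        rw [mp_orbit2 h s k hk0 hk a (by simpa using ha)]
  rw [e1, e2, e3]
  simp only [Multiset.insert_eq_cons, Multiset.count_cons, Multiset.count_singleton]
  have c1 : ∀ z : ℕ, (if z = m then z else 0) = m * if m = z then 1 else 0 := by
    intro z
    by_cases hz : z = m
    · simp [hz]
    · simp [hz, Ne.symm hz]
  rw [c1, c1, c1]
  ring

theorem exists_lt (h : Equiv.Perm X) (s t : X) (hst : s ≠ t) (m : ℕ) (hm : h^[m] s = t) :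
    ∃ k, 0 < k ∧ k < minimalPeriod h s ∧ h^[k] s = t := by
  refine ⟨m % minimalPeriod h s, ?_, Nat.mod_lt _ (mp_pos h s), ?_⟩
  · rw [Nat.pos_iff_ne_zero]
    intro h0
    rw [← iterate_mod_minimalPeriod_eq, h0] at hm
    exact hst hm
  · rw [iterate_mod_minimalPeriod_eq, hm]

theorem card_join (h : Equiv.Perm X) (s t : X) (hst : s ≠ t) (H : ∀ a, h^[a] s ≠ t) :
    (cycleTypeFull (swap s t * h)).card + 1 = (cycleTypeFull h).card := by
  have hl := iter_last h s t (minimalPeriod h s) (mp_pos h s) (fun b hb hb' =>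
    ⟨orbit_ne h s (b := 0) hb' (by omega) (by omega), H b⟩)
  rw [iterate_minimalPeriod, swap_apply_left] at hl
  obtain ⟨k, hk0, hk, e⟩ := exists_lt _ s t hst _ hl
  have := congrArg Multiset.card (full_cut _ s k hk0 hk)
  rw [e, ← mul_assoc, swap_mul_self, one_mul] at this
  simp only [Multiset.card_add, Multiset.card_singleton, Multiset.card_pair] at this
  omega

end helpers

/-- for a permutation `h` with cycle type `μ` (including fixed points) and
positive integers `i < j`, the number of transpositions `τ` such that the cycle type of
`τ ∘ h` is `μ` with one part `i + j` removed and two parts `i` and `j` added is exactly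
`(i + j) · m_{i+j}(μ)`. -/
theorem count_cut_transpositions_ne
    {X : Type*} [Fintype X] [DecidableEq X] (h : Equiv.Perm X) (i j : ℕ)
    (hi : 0 < i) (hij : i < j) :
    Set.ncard {τ : Equiv.Perm X | τ.IsSwap ∧
        cycleTypeFull (τ * h)
          = (cycleTypeFull h).erase (i + j) + {i, j}}
      = (i + j) * (cycleTypeFull h).count (i + j) := by
  classical
  rw [count_full, ← Set.ncard_coe_finset]
  symm
  refine Set.ncard_congr (fun s _ => swap s (h^[i] s)) ?_ ?_ ?_
  · intro s hs
    simp only [Finset.coe_filter, Finset.mem_univ, true_and, Set.mem_ofPred_eq] at hs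
    have hlt : i < Function.minimalPeriod h s := by omega
    refine ⟨⟨s, h^[i] s, orbit_ne h s (a := 0) (by omega) hlt (by omega), rfl⟩, ?_⟩
    have := full_cut h s i hi hlt
    rw [hs, Nat.add_sub_cancel_left] at this
    have hmem : i + j ∈ cycleTypeFull h := by
      have h2 : i + j ∈ cycleTypeFull h + {i, j} := by
        rw [← this]; simp
      rw [Multiset.mem_add] at h2
      rcases h2 with h2 | h2
      · exact h2
      · simp at h2; omega
    rw [← Multiset.cons_erase hmem, ← Multiset.singleton_add, add_comm, add_assoc] at this
    simpa using add_left_cancel this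
  · intro s s' hs hs' e
    simp only [Finset.coe_filter, Finset.mem_univ, true_and, Set.mem_ofPred_eq] at hs hs'
    have hne : s ≠ h^[i] s := orbit_ne h s (a := 0) (by omega) (by omega) (by omega)
    by_contra hss
    have e1 : swap s' (h^[i] s') s = h^[i] s := by
      rw [← e]; exact swap_apply_left _ _
    have e2 : s = h^[i] s' := by
      by_contra h2
      rw [swap_apply_of_ne_of_ne hss h2] at e1
      exact hne e1
    rw [← e2, swap_apply_right] at e1
    rw [e1, ← Function.iterate_add_apply] at e2
    exact orbit_ne h s (a := 0) (b := i + i) (by omega) (by omega) (by omega) e2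
  · rintro τ ⟨⟨s, t, hst, rfl⟩, hτ⟩
    by_cases H : ∀ a, h^[a] s ≠ t
    · exfalso
      have h1 := card_join h s t hst H
      have h2 := congrArg Multiset.card hτ
      have h3 : (cycleTypeFull h).card ≤ ((cycleTypeFull h).erase (i + j)).card + 1 := by
        by_cases hmem : i + j ∈ cycleTypeFull h
        · rw [Multiset.card_erase_add_one hmem]
        · rw [Multiset.erase_of_notMem hmem]
          omega
      simp only [Multiset.card_add, Multiset.card_pair] at h2
      omega
    · push Not at H
      obtain ⟨m, hm⟩ := H
      obtain ⟨k, hk0, hk, rfl⟩ := exists_lt h s t hst m hm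
      have h1 := full_cut h s k hk0 hk
      rw [hτ] at h1
      have hmem : i + j ∈ cycleTypeFull h := by
        by_contra hmem
        have h2 := congrArg Multiset.card h1
        rw [Multiset.erase_of_notMem hmem] at h2
        simp only [Multiset.card_add, Multiset.card_pair, Multiset.card_singleton] at h2
        omega
      set n := Function.minimalPeriod h s with hn
      have h2 : ({i, j} + {n} : Multiset ℕ) = {i + j} + {k, n - k} := by
        conv_rhs at h1 => rw [← Multiset.cons_erase hmem, ← Multiset.singleton_add, add_comm {i + j},
          add_assoc]
        rw [add_assoc] at h1
        exact add_left_cancel h1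
      have h3 : i + j = n := by
        have : i + j ∈ ({i, j} + {n} : Multiset ℕ) := by rw [h2]; simp
        simp at this
        omega
      have h4 : k = i ∨ k = j := by
        have : k ∈ ({i, j} + {n} : Multiset ℕ) := by rw [h2]; simp
        simp at this
        omega
      rcases h4 with rfl | rfl
      · exact ⟨s, by simp [← hn, h3], rfl⟩
      · refine ⟨h^[k] s, ?_, ?_⟩
        · simp [Function.minimalPeriod_apply_iterate (mp_mem h s), ← hn, h3]
        · rw [← Function.iterate_add_apply, h3, hn, Function.iterate_minimalPeriod, swap_comm]
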